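/- Let λ, λ' ∈ 𝓛* be two reciprocal lattice vectors and W_𝓛 ∈ C^∞ be 𝓛-periodic. Then for all integers k, p ≥ 0 there is a constant C_{k,p} such that |⟨H_𝓛^k e^{iλ·x}, H_𝓛^k e^{iλ'·x}⟩_{L²(𝓒)}| ≤ C_{k,p} (1 + |λ|^{2k} |λ'|^{2k}) / (1 + |λ − λ'|^{2p}). -/

import Mathlib

open MeasureTheory Complex


lemma pw_cube_integral (d : ℕ) (u : (Fin d → ℝ) → ℂ) (hu : ContDiff ℝ 1 u)
    (hper : ∀ (x : Fin d → ℝ) (m : Fin d → ℤ), u (x + fun i => (m i : ℝ)) = u x)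
    (v : Fin d → ℝ) :
    ∫ x in Set.Icc (fun _ : Fin d => -(1/2 : ℝ)) (fun _ => (1/2 : ℝ)), fderiv ℝ u x v = 0 := by
  have hsum : ∀ x, fderiv ℝ u x v = ∑ i, (v i • fderiv ℝ u x) (Pi.single i (1:ℝ)) := by
    intro x
    conv_lhs => rw [pi_eq_sum_univ' v]
    simp [map_sum]
  have hcf : Continuous (fderiv ℝ u) := hu.continuous_fderiv (by simp)
  cases d with
  | zero => simp [hsum]
  | succ n =>
    have key := integral_divergence_of_hasFDerivAt_off_countable'
      (fun _ : Fin (n+1) => -(1/2 : ℝ)) (fun _ => (1/2 : ℝ)) (fun _ => by norm_num)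
      (fun i x => v i • u x) (fun i x => v i • fderiv ℝ u x) ∅ (by simp)
      (fun i => (hu.continuous.const_smul (v i)).continuousOn)
      (fun x _ i => ((hu.differentiable (by simp)) x).hasFDerivAt.const_smul (v i))
      (by
        refine Continuous.integrableOn_Icc ?_
        simp_rw [← hsum]
        exact hcf.clm_apply continuous_const)
    simp_rw [hsum]
    rw [key]
    refine Finset.sum_eq_zero fun i _ => ?_
    rw [sub_eq_zero]
    congr 1
    funext x
    congr 1
    have := hper (Fin.insertNth i (-(1/2:ℝ)) x) (Pi.single i 1)
    rw [← this]
    congr 1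
    funext j
    rcases eq_or_ne j i with rfl | h
    · simp; norm_num
    · rcases Fin.exists_succAbove_eq h with ⟨k, rfl⟩
      simp

lemma pw_cell_integral (d : ℕ) (L : Matrix (Fin d) (Fin d) ℝ) (hdet : L.det ≠ 0)
    (u : (Fin d → ℝ) → ℂ) (hu : ContDiff ℝ 1 u)
    (hper : ∀ (x : Fin d → ℝ) (m : Fin d → ℤ), u (x + L.mulVec fun i => (m i : ℝ)) = u x)
    (v : Fin d → ℝ) :
    ∫ x in (fun t => L.mulVec t) '' Set.Icc (fun _ : Fin d => -(1/2 : ℝ)) (fun _ => (1/2 : ℝ)),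
      fderiv ℝ u x v = 0 := by
  let A : (Fin d → ℝ) →L[ℝ] (Fin d → ℝ) := LinearMap.toContinuousLinearMap (Matrix.toLin' L)
  have hA : ∀ t, A t = L.mulVec t := fun t => by simp [A]
  have hu' : IsUnit L.det := hdet.isUnit
  have hinj : Function.Injective (fun t => L.mulVec t) :=
    Matrix.mulVec_injective_iff_isUnit.2 ((Matrix.isUnit_iff_isUnit_det L).2 hu')
  rw [integral_image_eq_integral_abs_det_fderiv_smul volume measurableSet_Icc
    (f := fun t => L.mulVec t) (f' := fun _ => A)
    (fun x _ => by
      have := (A.hasFDerivAt (x := x)).hasFDerivWithinAt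
        (s := Set.Icc (fun _ : Fin d => -(1/2 : ℝ)) (fun _ => (1/2 : ℝ)))
      simpa [funext hA] using this) hinj.injOn]
  have h0 := pw_cube_integral d (u ∘ A) (hu.comp A.contDiff)
    (fun x m => by
      simp only [Function.comp_apply, map_add]
      rw [hA (fun i => (m i : ℝ)), hper]) (L⁻¹.mulVec v)
  have h1 : ∀ x, fderiv ℝ (u ∘ A) x (L⁻¹.mulVec v) = fderiv ℝ u (L.mulVec x) v := by
    intro x
    rw [fderiv_comp x ((hu.differentiable (by simp)) _) A.differentiableAt]
    simp [hA, Matrix.mul_nonsing_inv L hu']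
  simp_rw [h1] at h0
  rw [integral_smul, h0, smul_zero]

/-- Families of smooth periodic functions whose derivatives are all `O(w)`, uniformly. -/
structure PWSymb {d : ℕ} {ι : Type} (L : Matrix (Fin d) (Fin d) ℝ) (w : ι → ℝ)
    (a : ι → (Fin d → ℝ) → ℂ) : Prop where
  smooth : ∀ i, ContDiff ℝ (⊤ : ℕ∞) (a i)
  per : ∀ i x (m : Fin d → ℤ), a i (x + L.mulVec fun j => (m j : ℝ)) = a i x
  bd : ∀ n : ℕ, ∃ K : ℝ, 0 ≤ K ∧ ∀ i x, ‖iteratedFDeriv ℝ n (a i) x‖ ≤ K * w i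

namespace PWSymb
variable {d : ℕ} {ι κ : Type} {L : Matrix (Fin d) (Fin d) ℝ} {w w' : ι → ℝ}
  {a b : ι → (Fin d → ℝ) → ℂ}

lemma mono (h : PWSymb L w a) (hw : ∀ i, w i ≤ w' i) : PWSymb L w' a where
  smooth := h.smooth
  per := h.per
  bd n := by
    obtain ⟨K, hK, hb⟩ := h.bd n
    exact ⟨K, hK, fun i x => (hb i x).trans (mul_le_mul_of_nonneg_left (hw i) hK)⟩

lemma reindex (h : PWSymb L w a) (f : κ → ι) :
    PWSymb L (fun i => w (f i)) (fun i => a (f i)) where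
  smooth i := h.smooth _
  per i := h.per _
  bd n := by
    obtain ⟨K, hK, hb⟩ := h.bd n
    exact ⟨K, hK, fun i x => hb _ x⟩

lemma add (ha : PWSymb L w a) (hb : PWSymb L w b) : PWSymb L w (fun i x => a i x + b i x) where
  smooth i := (ha.smooth i).add (hb.smooth i)
  per i x m := by rw [ha.per, hb.per]
  bd n := by
    obtain ⟨K, hK, h1⟩ := ha.bd n
    obtain ⟨K', hK', h2⟩ := hb.bd n
    refine ⟨K + K', by positivity, fun i x => ?_⟩
    have e := iteratedFDeriv_add_apply (x := x)
      ((ha.smooth i).contDiffAt.of_le (m := (n : WithTop ℕ∞)) (mod_cast le_top))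
      ((hb.smooth i).contDiffAt.of_le (m := (n : WithTop ℕ∞)) (mod_cast le_top))
    have e' : (fun x => a i x + b i x) = a i + b i := rfl
    rw [e', e, add_mul]
    exact (norm_add_le _ _).trans (add_le_add (h1 i x) (h2 i x))

lemma const (c : ι → ℂ) (hc : ∀ i, ‖c i‖ ≤ w i) : PWSymb L w (fun i _ => c i) where
  smooth i := contDiff_const
  per i x m := rfl
  bd n := by
    refine ⟨1, zero_le_one, fun i x => ?_⟩
    rw [one_mul]
    rcases Nat.eq_zero_or_pos n with rfl | hn
    · simpa using hc i
    · rw [iteratedFDeriv_const_of_ne hn.ne']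
      simpa using (norm_nonneg _).trans (hc i)

lemma mul (ha : PWSymb L w a) (hb : PWSymb L w' b) :
    PWSymb L (fun i => w i * w' i) (fun i x => a i x * b i x) where
  smooth i := (ha.smooth i).mul (hb.smooth i)
  per i x m := by rw [ha.per, hb.per]
  bd n := by
    choose K hK h1 using ha.bd
    choose K' hK' h2 using hb.bd
    refine ⟨∑ j ∈ Finset.range (n + 1), (n.choose j : ℝ) * K j * K' (n - j),
      Finset.sum_nonneg fun j _ => by have := hK j; have := hK' (n - j); positivity,
      fun i x => ?_⟩
    refine (norm_iteratedFDeriv_mul_le (ha.smooth i) (hb.smooth i) x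
      (n := n) (mod_cast le_top)).trans ?_
    rw [Finset.sum_mul]
    refine Finset.sum_le_sum fun j _ => ?_
    have := mul_le_mul (h1 j i x) (h2 (n - j) i x) (norm_nonneg _)
      ((norm_nonneg _).trans (h1 j i x))
    calc _ = (n.choose j : ℝ) * (‖iteratedFDeriv ℝ j (a i) x‖ *
            ‖iteratedFDeriv ℝ (n - j) (b i) x‖) := by ring
      _ ≤ (n.choose j : ℝ) * (K j * w i * (K' (n - j) * w' i)) := by gcongr
      _ = _ := by ring

lemma clm (h : PWSymb L w a) (A : ℂ →L[ℝ] ℂ) : PWSymb L w (fun i x => A (a i x)) where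
  smooth i := A.contDiff.comp (h.smooth i)
  per i x m := by rw [h.per]
  bd n := by
    obtain ⟨K, hK, h1⟩ := h.bd n
    refine ⟨‖A‖ * K, by positivity, fun i x => ?_⟩
    refine (A.norm_iteratedFDeriv_comp_left (h.smooth i).contDiffAt
      (n := n) (mod_cast le_top)).trans ?_
    rw [mul_assoc]
    exact mul_le_mul_of_nonneg_left (h1 i x) (norm_nonneg _)

lemma deriv (h : PWSymb L w a) (v : Fin d → ℝ) : PWSymb L w (fun i x => fderiv ℝ (a i) x v) where
  smooth i := ((h.smooth i).fderiv_right (m := (⊤ : ℕ∞)) (by simp)).clm_apply contDiff_const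
  per i x m := by
    have : (fun y => a i (y + L.mulVec fun j => (m j : ℝ))) = a i := funext fun y => h.per i y m
    rw [← fderiv_comp_add_right, this]
  bd n := by
    obtain ⟨K, hK, h1⟩ := h.bd (n + 1)
    refine ⟨‖v‖ * K, by positivity, fun i x => ?_⟩
    have hs : ContDiff ℝ (⊤ : ℕ∞) (fderiv ℝ (a i)) :=
      (h.smooth i).fderiv_right (m := (⊤ : ℕ∞)) (by simp)
    refine (norm_iteratedFDeriv_clm_apply_const hs.contDiffAt
      (n := n) (mod_cast le_top)).trans ?_
    rw [norm_iteratedFDeriv_fderiv, mul_assoc]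
    exact mul_le_mul_of_nonneg_left (h1 i x) (norm_nonneg _)

lemma sum {σ : Type} (s : Finset σ) (f : σ → ι → (Fin d → ℝ) → ℂ) (hw : ∀ i, 0 ≤ w i)
    (h : ∀ j, PWSymb L w (f j)) : PWSymb L w (fun i x => ∑ j ∈ s, f j i x) := by
  classical
  induction s using Finset.induction_on with
  | empty => simpa using PWSymb.const (L := L) (fun _ : ι => (0:ℂ)) (by simpa using hw)
  | insert j s hj ih =>
    simp_rw [Finset.sum_insert hj]
    exact (h j).add ih

/-- A smooth periodic function is a symbol of order zero. -/
lemma of_periodic (hdet : L.det ≠ 0) (V : (Fin d → ℝ) → ℂ) (hV : ContDiff ℝ (⊤ : ℕ∞) V)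
    (hper : ∀ x (m : Fin d → ℤ), V (x + L.mulVec fun j => (m j : ℝ)) = V x) :
    PWSymb L (fun _ : ι => (1:ℝ)) (fun _ => V) where
  smooth _ := hV
  per _ := hper
  bd n := by
    have hu' : IsUnit L.det := hdet.isUnit
    have hc : Continuous (iteratedFDeriv ℝ n V) :=
      hV.continuous_iteratedFDeriv (mod_cast le_top)
    have hcomp : IsCompact ((fun t => L.mulVec t) '' Set.Icc (0 : Fin d → ℝ) 1) :=
      isCompact_Icc.image (by fun_prop)
    obtain ⟨K, hK⟩ := hcomp.exists_bound_of_continuousOn hc.continuousOn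
    refine ⟨max K 0, le_max_right _ _, fun _ x => ?_⟩
    rw [mul_one]
    refine le_trans ?_ (le_max_left _ _)
    set t := L⁻¹.mulVec x with ht
    have hx : x = L.mulVec t := by simp [ht, Matrix.mul_nonsing_inv L hu']
    have h1 : L.mulVec (fun j => Int.fract (t j)) + L.mulVec (fun j => ((⌊t j⌋ : ℤ) : ℝ)) = x := by
      rw [← Matrix.mulVec_add, hx]
      congr 1
      funext j
      simp
    have : (fun y => V (y + L.mulVec fun j => ((⌊t j⌋ : ℤ) : ℝ))) = V :=
      funext fun y => hper y _
    rw [← h1, ← iteratedFDeriv_comp_add_right, this]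
    exact hK _ ⟨_, ⟨fun j => Int.fract_nonneg _, fun j => (Int.fract_lt_one _).le⟩, rfl⟩

end PWSymb

/-- The plane wave `exp (i λ·x)`. -/
noncomputable def pwE {d : ℕ} (lam : Fin d → ℝ) : (Fin d → ℝ) → ℂ :=
  fun y => Complex.exp (Complex.I * (∑ i, lam i * y i : ℝ))

/-- The Euclidean norm. -/
noncomputable def pwN {d : ℕ} (lam : Fin d → ℝ) : ℝ := Real.sqrt (∑ i, (lam i) ^ 2)

lemma pwN_nonneg {d : ℕ} (lam : Fin d → ℝ) : 0 ≤ pwN lam := Real.sqrt_nonneg _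

lemma pwN_eq {d : ℕ} (lam : Fin d → ℝ) : pwN lam = ‖WithLp.toLp 2 lam‖ := by
  simp [pwN, EuclideanSpace.norm_eq]

lemma pwN_le_add {d : ℕ} (l m : Fin d → ℝ) : pwN m ≤ pwN l + pwN (l - m) := by
  rw [pwN_eq, pwN_eq, pwN_eq, WithLp.toLp_sub]
  linarith [norm_sub_norm_le (WithLp.toLp 2 m) (WithLp.toLp 2 l),
    norm_sub_rev (WithLp.toLp 2 m) (WithLp.toLp 2 l)]

lemma pwN_le_add' {d : ℕ} (l m : Fin d → ℝ) : pwN l ≤ pwN m + pwN (l - m) := by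
  rw [pwN_eq, pwN_eq, pwN_eq, WithLp.toLp_sub]
  linarith [norm_sub_norm_le (WithLp.toLp 2 l) (WithLp.toLp 2 m)]

lemma abs_le_pwN {d : ℕ} (l : Fin d → ℝ) (j : Fin d) : |l j| ≤ pwN l := by
  rw [pwN_eq]
  exact PiLp.norm_apply_le (WithLp.toLp 2 l) j

lemma pwN_le_sum {d : ℕ} (l : Fin d → ℝ) : pwN l ≤ ∑ j, |l j| := by
  unfold pwN
  rw [Real.sqrt_le_left (Finset.sum_nonneg fun j _ => abs_nonneg _)]
  simp_rw [← sq_abs (l _)]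
  exact Finset.sum_sq_le_sq_sum_of_nonneg fun j _ => abs_nonneg _

lemma pwE_norm {d : ℕ} (lam x : Fin d → ℝ) : ‖pwE lam x‖ = 1 := by
  unfold pwE
  rw [mul_comm]
  exact Complex.norm_exp_ofReal_mul_I _

lemma pwE_contDiff {d : ℕ} (lam : Fin d → ℝ) : ContDiff ℝ (⊤ : ℕ∞) (pwE lam) := by
  unfold pwE
  refine ContDiff.cexp (contDiff_const.mul (Complex.ofRealCLM.contDiff.comp ?_))
  have h : ∀ i : Fin d, ContDiff ℝ (⊤ : ℕ∞) (fun y : Fin d → ℝ => lam i * y i) :=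
    fun i => contDiff_const.mul (contDiff_apply ℝ ℝ i)
  exact ContDiff.sum (s := Finset.univ) (f := fun i (y : Fin d → ℝ) => lam i * y i)
    fun i _ => h i

lemma pwE_fderiv {d : ℕ} (lam x : Fin d → ℝ) (j : Fin d) :
    fderiv ℝ (pwE lam) x (Pi.single j 1) = Complex.I * lam j * pwE lam x := by
  let A : (Fin d → ℝ) →L[ℝ] ℝ := ∑ i, lam i • ContinuousLinearMap.proj i
  have hA : ∀ y, A y = ∑ i, lam i * y i := fun y => by simp [A]
  have h : HasFDerivAt (pwE lam) (Complex.exp (Complex.I * (∑ i, lam i * x i : ℝ)) •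
      (Complex.I • (Complex.ofRealCLM.comp A))) x := by
    have := ((Complex.ofRealCLM.comp A).hasFDerivAt (x := x)).const_mul Complex.I
    have := this.cexp
    simp only [ContinuousLinearMap.comp_apply, hA, Complex.ofRealCLM_apply] at this
    exact this
  rw [h.fderiv]
  simp [hA, pwE, Pi.single_apply]
  ring

lemma pwE_mul_fderiv {d : ℕ} (lam x : Fin d → ℝ) (j : Fin d) (a : (Fin d → ℝ) → ℂ)
    (ha : ContDiff ℝ (⊤ : ℕ∞) a) :
    fderiv ℝ (fun y => a y * pwE lam y) x (Pi.single j 1) =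
      (fderiv ℝ a x (Pi.single j 1) + Complex.I * lam j * a x) * pwE lam x := by
  rw [fderiv_fun_mul (ha.differentiable (by simp) x)
    ((pwE_contDiff lam).differentiable (by simp) x)]
  simp [pwE_fderiv]
  ring

lemma pwE_conj_mul {d : ℕ} (l m x : Fin d → ℝ) :
    (starRingEnd ℂ) (pwE l x) * pwE m x = pwE (m - l) x := by
  unfold pwE
  rw [← Complex.exp_conj, ← Complex.exp_add]
  congr 1
  simp [sub_mul, Finset.sum_sub_distrib]
  ring

lemma pwE_per {d : ℕ} {L Lstar : Matrix (Fin d) (Fin d) ℝ}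
    (hrec : L.transpose * Lstar = (2 * Real.pi) • (1 : Matrix (Fin d) (Fin d) ℝ))
    (z : Fin d → ℤ) (x : Fin d → ℝ) (m : Fin d → ℤ) :
    pwE (Lstar.mulVec fun i => (z i : ℝ)) (x + L.mulVec fun i => (m i : ℝ)) =
      pwE (Lstar.mulVec fun i => (z i : ℝ)) x := by
  have h : ∑ i, (Lstar.mulVec fun i => (z i : ℝ)) i * (L.mulVec fun i => (m i : ℝ)) i
      = ((∑ i, m i * z i : ℤ) : ℝ) * (2 * Real.pi) := by
    change (Lstar.mulVec fun i => (z i : ℝ)) ⬝ᵥ (L.mulVec fun i => (m i : ℝ)) = _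
    rw [dotProduct_comm, ← Matrix.vecMul_transpose, ← Matrix.dotProduct_mulVec,
      Matrix.mulVec_mulVec, hrec, Matrix.smul_mulVec, Matrix.one_mulVec, dotProduct_smul]
    simp [dotProduct, mul_comm]
  unfold pwE
  simp only [Pi.add_apply, mul_add, Finset.sum_add_distrib]
  rw [h, Complex.ofReal_add, mul_add, Complex.exp_add]
  have : Complex.I * (((((∑ i, m i * z i : ℤ) : ℝ) * (2 * Real.pi) : ℝ)) : ℂ) =
      ((∑ i, m i * z i : ℤ) : ℂ) * (2 * Real.pi * Complex.I) := by push_cast; ring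
  rw [this, Complex.exp_int_mul_two_pi_mul_I, mul_one]

lemma pw_decay {d : ℕ} {ι : Type} {L : Matrix (Fin d) (Fin d) ℝ} (hdet : L.det ≠ 0)
    (C : Set (Fin d → ℝ))
    (hC : C = (fun t => L.mulVec t) ''
      Set.Icc (fun _ => -(1/2 : ℝ)) (fun _ => (1/2 : ℝ)))
    (w : ι → ℝ) (mu : ι → Fin d → ℝ)
    (hmu : ∀ i x (m : Fin d → ℤ),
      pwE (mu i) (x + L.mulVec fun j => (m j : ℝ)) = pwE (mu i) x) (N : ℕ) :
    ∀ G : ι → (Fin d → ℝ) → ℂ, PWSymb L w G → ∃ K : ℝ, 0 ≤ K ∧ ∀ i,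
      (1 + pwN (mu i)) ^ N * ‖∫ x in C, G i x * pwE (mu i) x‖ ≤ K * w i := by
  have hcomp : IsCompact C := by
    rw [hC]; exact isCompact_Icc.image (by fun_prop)
  induction N with
  | zero =>
    intro G hG
    obtain ⟨K, hK, hb⟩ := hG.bd 0
    refine ⟨K * volume.real C, by positivity, fun i => ?_⟩
    rw [pow_zero, one_mul]
    refine (norm_setIntegral_le_of_norm_le_const hcomp.measure_lt_top
      (C := K * w i) fun x _ => ?_).trans (by ring_nf; rfl)
    rw [norm_mul, pwE_norm, mul_one]
    simpa using hb i x
  | succ N ih =>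
    intro G hG
    obtain ⟨K0, hK0, h0⟩ := ih G hG
    have hd := fun j : Fin d => ih _ (hG.deriv (Pi.single j (1:ℝ)))
    choose K hK h using hd
    refine ⟨K0 + ∑ j, K j, add_nonneg hK0 (Finset.sum_nonneg fun j _ => hK j), fun i => ?_⟩
    have hI : ∀ f : (Fin d → ℝ) → ℂ, Continuous f → IntegrableOn f C := fun f hf =>
      hf.continuousOn.integrableOn_compact hcomp
    have ibp : ∀ j, |mu i j| * ‖∫ x in C, G i x * pwE (mu i) x‖ =
        ‖∫ x in C, fderiv ℝ (G i) x (Pi.single j 1) * pwE (mu i) x‖ := by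
      intro j
      have hz := pw_cell_integral d L hdet (fun y => G i y * pwE (mu i) y)
        (((hG.smooth i).mul (pwE_contDiff _)).of_le (mod_cast le_top))
        (fun x m => by rw [hG.per, hmu]) (Pi.single j 1)
      rw [← hC] at hz
      simp_rw [pwE_mul_fderiv _ _ _ _ (hG.smooth i), add_mul] at hz
      have hE := (pwE_contDiff (mu i)).continuous
      have i1 : IntegrableOn (fun x => fderiv ℝ (G i) x (Pi.single j 1) * pwE (mu i) x) C :=
        hI _ (((hG.deriv _).smooth i).continuous.mul hE)
      have i2 : IntegrableOn (fun x => Complex.I * (mu i j : ℂ) * G i x * pwE (mu i) x) C :=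
        hI _ ((continuous_const.mul (hG.smooth i).continuous).mul hE)
      rw [integral_add i1 i2] at hz
      simp_rw [mul_assoc (Complex.I * (mu i j : ℂ))] at hz
      rw [integral_const_mul] at hz
      rw [eq_neg_of_add_eq_zero_left hz, norm_neg, norm_mul]
      simp
    set J := ‖∫ x in C, G i x * pwE (mu i) x‖ with hJ
    have hN := pwN_nonneg (mu i)
    have hJ0 : 0 ≤ J := norm_nonneg _
    calc (1 + pwN (mu i)) ^ (N + 1) * J
        = (1 + pwN (mu i)) ^ N * J + (1 + pwN (mu i)) ^ N * (pwN (mu i) * J) := by ring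
      _ ≤ (1 + pwN (mu i)) ^ N * J + (1 + pwN (mu i)) ^ N * ((∑ j, |mu i j|) * J) := by
          gcongr; exact pwN_le_sum _
      _ = (1 + pwN (mu i)) ^ N * J + ∑ j, (1 + pwN (mu i)) ^ N * (|mu i j| * J) := by
          rw [Finset.sum_mul, Finset.mul_sum]
      _ ≤ K0 * w i + ∑ j, K j * w i := by
          refine add_le_add (h0 i) (Finset.sum_le_sum fun j _ => ?_)
          rw [ibp]
          exact h j i
      _ = _ := by rw [add_mul, Finset.sum_mul]

/-- `H^k` applied to a plane wave is a symbol of order `2k` times the plane wave. -/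
lemma pw_Hpow {d : ℕ} {L : Matrix (Fin d) (Fin d) ℝ} (hdet : L.det ≠ 0)
    (W : (Fin d → ℝ) → ℝ)
    (hWsmooth : ContDiff ℝ (⊤ : ℕ∞) W)
    (hWper : ∀ (z : Fin d → ℝ) (m : Fin d → ℤ),
      W (z + L.mulVec (fun i => (m i : ℝ))) = W z)
    (Hop : ((Fin d → ℝ) → ℂ) → ((Fin d → ℝ) → ℂ))
    (hHop : ∀ (f : (Fin d → ℝ) → ℂ) (x : Fin d → ℝ),
      Hop f x = (-(1/2) : ℂ) * (∑ i, fderiv ℝ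
          (fun y => fderiv ℝ f y (Pi.single i (1 : ℝ))) x (Pi.single i (1 : ℝ)))
        + (W x : ℂ) * f x) (k : ℕ) :
    ∃ a : (Fin d → ℝ) → (Fin d → ℝ) → ℂ,
      PWSymb L (fun l : Fin d → ℝ => (1 + pwN l) ^ (2 * k)) a ∧
      ∀ l, Hop^[k] (pwE l) = fun x => a l x * pwE l x := by
  induction k with
  | zero =>
    exact ⟨fun _ _ => 1, PWSymb.const (fun _ => 1) (by simp), fun l => by simp⟩
  | succ k ih =>
    obtain ⟨a, ha, hHa⟩ := ih
    have hD : ∀ (w : (Fin d → ℝ) → ℝ) (b : (Fin d → ℝ) → (Fin d → ℝ) → ℂ) (j : Fin d),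
        (∀ l, 0 ≤ w l) → PWSymb L w b → PWSymb L (fun l => (1 + pwN l) * w l)
        (fun l x => fderiv ℝ (b l) x (Pi.single j 1) + Complex.I * l j * b l x) := by
      intro w b j hw hb
      refine ((hb.deriv (Pi.single j 1)).mono fun l => ?_).add
        ((PWSymb.const (w := fun l => 1 + pwN l)
          (fun l : Fin d → ℝ => Complex.I * (l j : ℂ)) fun l => ?_).mul hb)
      · have := pwN_nonneg l
        nlinarith [hw l, mul_nonneg this (hw l)]
      · have := abs_le_pwN l j
        simp
        linarith
    have hw : ∀ l : Fin d → ℝ, 0 ≤ (1 + pwN l) ^ (2 * k) := fun l => by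
      have := pwN_nonneg l; positivity
    have hw1 : ∀ l : Fin d → ℝ, 0 ≤ (1 + pwN l) * (1 + pwN l) ^ (2 * k) := fun l => by
      have := pwN_nonneg l; positivity
    have hw2 : ∀ l : Fin d → ℝ, 0 ≤ (1 + pwN l) * ((1 + pwN l) * (1 + pwN l) ^ (2 * k)) :=
      fun l => by have := pwN_nonneg l; positivity
    have h1 := fun j => hD _ a j hw ha
    have h2 := fun j => hD _ _ j hw1 (h1 j)
    have h3 := (PWSymb.const (L := L) (w := fun _ => 1)
      (fun _ : Fin d → ℝ => (-(1/2) : ℂ)) (by intro; norm_num)).mul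
      (PWSymb.sum Finset.univ _ hw2 h2)
    have hW := PWSymb.of_periodic (ι := Fin d → ℝ) hdet (fun x => (W x : ℂ))
      (Complex.ofRealCLM.contDiff.comp hWsmooth) (fun x m => by rw [hWper])
    refine ⟨_, (h3.mono (w' := fun l : Fin d → ℝ => (1 + pwN l) ^ (2 * (k + 1)))
      fun l => ?_).add ((hW.mul ha).mono fun l => ?_), fun l => ?_⟩
    · apply le_of_eq; ring
    · rw [one_mul]
      have := pwN_nonneg l
      exact pow_le_pow_right₀ (by linarith) (by omega)
    · rw [Function.iterate_succ_apply', hHa]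
      funext x
      rw [hHop]
      have e1 : ∀ j, (fun y => fderiv ℝ (fun x => a l x * pwE l x) y (Pi.single j (1:ℝ))) =
          fun y => (fderiv ℝ (a l) y (Pi.single j 1) + Complex.I * l j * a l y) * pwE l y :=
        fun j => funext fun y => pwE_mul_fderiv l y j (a l) (ha.smooth l)
      simp_rw [e1]
      have e2 : ∀ j, fderiv ℝ (fun y => (fderiv ℝ (a l) y (Pi.single j 1) +
          Complex.I * l j * a l y) * pwE l y) x (Pi.single j (1:ℝ)) = _ :=
        fun j => pwE_mul_fderiv l x j _ ((h1 j).smooth l)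
      simp_rw [e2, ← Finset.sum_mul]
      ring

lemma pw_weight (a b δ : ℝ) (ha : 0 ≤ a) (hb : 0 ≤ b) (hδ : 0 ≤ δ)
    (h1 : a ≤ b + δ) (h2 : b ≤ a + δ) :
    (1 + a) * (1 + b) ≤ 4 * (1 + a * b) * (1 + δ) := by
  have hab := mul_nonneg ha hb
  have h3 : (1 + a) * (1 + b) ≤ 4 * (1 + a * b) ∨ (1 + a) * (1 + b) ≤ 4 * (1 + δ) := by
    rcases le_total a 1 with h | h
    · right; nlinarith
    · rcases le_total b 1 with h' | h'
      · right; nlinarith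
      · left; nlinarith
  rcases h3 with h3 | h3
  · nlinarith
  · nlinarith [mul_nonneg hab hδ]


/-- For λ, λ' in the reciprocal lattice 𝓛* and W_𝓛 ∈ C^∞
𝓛-periodic, for all integers k, p ≥ 0 there is C_{k,p} > 0 such that
|⟨H_𝓛^k e^{iλ·x}, H_𝓛^k e^{iλ'·x}⟩_{L²(𝓒)}| ≤
C_{k,p} (1 + |λ|^{2k} |λ'|^{2k}) / (1 + |λ − λ'|^{2p}),
with H_𝓛 = −½Δ + W_𝓛 and |·| the Euclidean norm. -/
theorem plane_wave_matrix_element_decay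
    (d : ℕ) (L Lstar : Matrix (Fin d) (Fin d) ℝ) (hdet : L.det ≠ 0)
    (hrec : L.transpose * Lstar = (2 * Real.pi) • (1 : Matrix (Fin d) (Fin d) ℝ))
    (C : Set (Fin d → ℝ))
    (hC : C = (fun t => L.mulVec t) ''
      Set.Icc (fun _ => -(1/2 : ℝ)) (fun _ => (1/2 : ℝ)))
    (Lat : Set (Fin d → ℝ))
    (hLat : Lat = {x | ∃ z : Fin d → ℤ, x = Lstar.mulVec (fun i => (z i : ℝ))})
    (W : (Fin d → ℝ) → ℝ)
    (hWsmooth : ContDiff ℝ (⊤ : ℕ∞) W)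
    (hWper : ∀ (z : Fin d → ℝ) (m : Fin d → ℤ),
      W (z + L.mulVec (fun i => (m i : ℝ))) = W z)
    (Hop : ((Fin d → ℝ) → ℂ) → ((Fin d → ℝ) → ℂ))
    (hHop : ∀ (f : (Fin d → ℝ) → ℂ) (x : Fin d → ℝ),
      Hop f x = (-(1/2) : ℂ) * (∑ i, fderiv ℝ
          (fun y => fderiv ℝ f y (Pi.single i (1 : ℝ))) x (Pi.single i (1 : ℝ)))
        + (W x : ℂ) * f x) :
    ∀ k p : ℕ, ∃ Ckp > 0, ∀ lam lam' : Fin d → ℝ, lam ∈ Lat → lam' ∈ Lat →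
      ‖∫ x in C,
          (starRingEnd ℂ) ((Hop^[k] (fun y => Complex.exp (Complex.I * (∑ i, lam i * y i : ℝ)))) x) *
            (Hop^[k] (fun y => Complex.exp (Complex.I * (∑ i, lam' i * y i : ℝ)))) x‖
        ≤ Ckp * (1 + Real.sqrt (∑ i, (lam i) ^ 2) ^ (2 * k) *
              Real.sqrt (∑ i, (lam' i) ^ 2) ^ (2 * k)) /
            (1 + Real.sqrt (∑ i, (lam i - lam' i) ^ 2) ^ (2 * p)) := by
  intro k p
  obtain ⟨a, ha, hHa⟩ := pw_Hpow hdet W hWsmooth hWper Hop hHop k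
  have hmem : ∀ q : Lat × Lat, ∃ z : Fin d → ℤ,
      (q.2 : Fin d → ℝ) - q.1 = Lstar.mulVec (fun i => (z i : ℝ)) := by
    rintro ⟨⟨l, hl⟩, ⟨m, hm⟩⟩
    rw [hLat] at hl hm
    obtain ⟨z, rfl⟩ := hl
    obtain ⟨z', rfl⟩ := hm
    refine ⟨z' - z, ?_⟩
    simp only
    rw [← Matrix.mulVec_sub]
    congr 1
    funext i
    simp
  have hG := ((ha.clm Complex.conjCLE.toContinuousLinearMap).reindex
    (fun q : Lat × Lat => (q.1 : Fin d → ℝ))).mul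
    (ha.reindex (fun q : Lat × Lat => (q.2 : Fin d → ℝ)))
  obtain ⟨K, hK, hb⟩ := pw_decay hdet C hC _ (fun q : Lat × Lat => (q.2 : Fin d → ℝ) - q.1)
    (fun q x m => by
      obtain ⟨z, hz⟩ := hmem q
      simp only [hz]
      exact pwE_per hrec z x m) (2 * k + 2 * p) _ hG
  refine ⟨2 * ((K + 1) * (4 ^ (2 * k) * 2 ^ (2 * k))), by positivity, fun l m hl hm => ?_⟩
  have hb' := hb (⟨l, hl⟩, ⟨m, hm⟩)
  simp only at hb'
  have hint : ∀ x, (starRingEnd ℂ) ((Hop^[k] (fun y => Complex.exp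
      (Complex.I * (∑ i, l i * y i : ℝ)))) x) *
      (Hop^[k] (fun y => Complex.exp (Complex.I * (∑ i, m i * y i : ℝ)))) x =
      (Complex.conjCLE.toContinuousLinearMap (a l x) * a m x) * pwE (m - l) x := by
    intro x
    change (starRingEnd ℂ) ((Hop^[k] (pwE l)) x) * (Hop^[k] (pwE m)) x = _
    rw [hHa, hHa, ← pwE_conj_mul, map_mul]
    simp
    ring
  simp_rw [hint]
  set J := ‖∫ x in C, (Complex.conjCLE.toContinuousLinearMap (a l x) * a m x) * pwE (m - l) x‖
    with hJ
  have hJ0 : 0 ≤ J := norm_nonneg _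
  change J ≤ _ * (1 + pwN l ^ (2 * k) * pwN m ^ (2 * k)) / (1 + pwN (l - m) ^ (2 * p))
  have hsym : pwN (m - l) = pwN (l - m) := by
    rw [pwN_eq, pwN_eq, WithLp.toLp_sub, WithLp.toLp_sub, norm_sub_rev]
  rw [hsym] at hb'
  have h1 := pwN_le_add l m
  have h2 := pwN_le_add' l m
  have hA := pwN_nonneg l
  have hB := pwN_nonneg m
  have hδ := pwN_nonneg (l - m)
  generalize pwN l = A at *
  generalize pwN m = B at *
  generalize pwN (l - m) = δ at *
  have hw := pw_weight A B δ hA hB hδ h2 h1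
  have hAB := mul_nonneg hA hB
  have hpos : 0 < (1 + δ) ^ (2 * k) := by positivity
  have s1 : (1 + δ) ^ (2 * p) * J ≤ K * (4 ^ (2 * k) * (1 + A * B) ^ (2 * k)) := by
    refine le_of_mul_le_mul_left ?_ hpos
    calc (1 + δ) ^ (2 * k) * ((1 + δ) ^ (2 * p) * J) = (1 + δ) ^ (2 * k + 2 * p) * J := by ring
      _ ≤ K * ((1 + A) ^ (2 * k) * (1 + B) ^ (2 * k)) := hb'
      _ = K * ((1 + A) * (1 + B)) ^ (2 * k) := by rw [mul_pow]
      _ ≤ K * (4 * (1 + A * B) * (1 + δ)) ^ (2 * k) := by gcongr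
      _ = _ := by rw [mul_pow, mul_pow]; ring
  have s2 : (1 + A * B) ^ (2 * k) ≤ 2 ^ (2 * k) * (1 + A ^ (2 * k) * B ^ (2 * k)) := by
    have hm : 1 + A * B ≤ 2 * max 1 (A * B) := by
      linarith [le_max_left 1 (A * B), le_max_right 1 (A * B)]
    have hAk : 0 ≤ A ^ (2 * k) * B ^ (2 * k) := by positivity
    calc (1 + A * B) ^ (2 * k) ≤ (2 * max 1 (A * B)) ^ (2 * k) := by gcongr
      _ = 2 ^ (2 * k) * (max 1 (A * B)) ^ (2 * k) := mul_pow _ _ _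
      _ ≤ _ := by
        gcongr
        rcases max_cases 1 (A * B) with h | h
        · rw [h.1, one_pow]; linarith
        · rw [h.1, mul_pow]; linarith
  have s3 : 1 + δ ^ (2 * p) ≤ 2 * (1 + δ) ^ (2 * p) := by
    have e1 : (1:ℝ) ≤ (1 + δ) ^ (2 * p) := one_le_pow₀ (by linarith)
    have e2 : δ ^ (2 * p) ≤ (1 + δ) ^ (2 * p) := by gcongr; linarith
    linarith
  rw [le_div_iff₀ (by positivity)]
  have hQ : 0 ≤ 1 + A ^ (2 * k) * B ^ (2 * k) := by positivity
  calc J * (1 + δ ^ (2 * p)) ≤ J * (2 * (1 + δ) ^ (2 * p)) := by gcongr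
    _ = 2 * ((1 + δ) ^ (2 * p) * J) := by ring
    _ ≤ 2 * (K * (4 ^ (2 * k) * (1 + A * B) ^ (2 * k))) := by gcongr
    _ ≤ 2 * ((K + 1) * (4 ^ (2 * k) * (2 ^ (2 * k) * (1 + A ^ (2 * k) * B ^ (2 * k))))) := by
        gcongr; linarith
    _ = _ := by ring
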